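/- arXiv:math/0607322 — 5 statements merged into one kernel-verified Lean document; each statement's English description precedes it below -/
import Mathlib

section
/- Let g : [1,∞) → ℝ be continuous and positive with ∫₁^∞ dt/g(t) = 1, and let δ > 0. Then h_δ is twice differentiable on (1,∞) and satisfies the ordinary differential equation h_δ''(x) + (δ/((1+δ)·g(x)))·(1 + h_δ'(x))² = 0 for all x > 1. -/
open MeasureTheory Set

/-- `G_δ(x) = (1/(1+δ))·(1 + δ·∫₁^x dt/g(t))` (normalized so that `∫₁^∞ dt/g(t) = 1`). -/
noncomputable def Gdelta (g : ℝ → ℝ) (δ x : ℝ) : ℝ :=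
  (1 / (1 + δ)) * (1 + δ * ∫ t in (1:ℝ)..x, 1 / g t)

/-- `h_δ(x) = ∫₁^x (1 − G_δ(y))/G_δ(y) dy`. -/
noncomputable def hdelta (g : ℝ → ℝ) (δ x : ℝ) : ℝ :=
  ∫ y in (1:ℝ)..x, (1 - Gdelta g δ y) / Gdelta g δ y

theorem stmt_2 (g : ℝ → ℝ) (δ : ℝ) (hδ : 0 < δ)
    (hgc : ContinuousOn g (Set.Ici 1))
    (hgpos : ∀ x ∈ Set.Ici (1:ℝ), 0 < g x)
    (hgint : IntegrableOn (fun t => 1 / g t) (Set.Ioi 1))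
    (hgnorm : (∫ t in Set.Ioi (1:ℝ), 1 / g t) = 1) :
    ∀ x ∈ Set.Ioi (1:ℝ),
      DifferentiableAt ℝ (hdelta g δ) x ∧
      DifferentiableAt ℝ (deriv (hdelta g δ)) x ∧
      deriv (deriv (hdelta g δ)) x + (δ / ((1 + δ) * g x)) * (1 + deriv (hdelta g δ) x) ^ 2 = 0 := by
  have hinv : ContinuousOn (fun t => 1 / g t) (Set.Ici 1) :=
    continuousOn_const.div hgc (fun x hx => (hgpos x hx).ne')
  have hII : ∀ x, 1 ≤ x → IntervalIntegrable (fun t => 1 / g t) volume 1 x := by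
    intro x hx
    apply ContinuousOn.intervalIntegrable
    rw [Set.uIcc_of_le hx]
    exact hinv.mono Set.Icc_subset_Ici_self
  have hGpos : ∀ x, 1 ≤ x → 0 < Gdelta g δ x := by
    intro x hx
    have h0 : 0 ≤ ∫ t in (1:ℝ)..x, 1 / g t := by
      apply intervalIntegral.integral_nonneg hx
      intro t ht
      exact (one_div_pos.mpr (hgpos t ht.1)).le
    unfold Gdelta
    positivity
  have hGd : ∀ x, 1 < x → HasDerivAt (Gdelta g δ) (1 / (1 + δ) * (δ * (1 / g x))) x := by
    intro x hx
    have hnhds : Set.Ioi (1:ℝ) ∈ nhds x := Ioi_mem_nhds hx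
    have hc : ContinuousOn (fun t => 1 / g t) (Set.Ioi 1) := hinv.mono Set.Ioi_subset_Ici_self
    have h1 := intervalIntegral.integral_hasDerivAt_right (hII x hx.le)
      (hc.stronglyMeasurableAtFilter isOpen_Ioi x hx) (hc.continuousAt hnhds)
    exact ((h1.const_mul δ).const_add 1).const_mul (1 / (1 + δ))
  have hGc : ∀ x, 1 ≤ x → ContinuousOn (Gdelta g δ) (Set.Icc 1 x) := by
    intro x hx
    have h1 : ContinuousOn (fun y => ∫ t in (1:ℝ)..y, 1 / g t) (Set.uIcc 1 x) := by
      apply intervalIntegral.continuousOn_primitive_interval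
      rw [Set.uIcc_of_le hx]
      exact (hinv.mono Set.Icc_subset_Ici_self).integrableOn_Icc
    rw [Set.uIcc_of_le hx] at h1
    exact continuousOn_const.mul (continuousOn_const.add (continuousOn_const.mul h1))
  have hGc' : ContinuousOn (Gdelta g δ) (Set.Ioi 1) :=
    fun x hx => (hGd x hx).continuousAt.continuousWithinAt
  have hqc : ContinuousOn (fun y => (1 - Gdelta g δ y) / Gdelta g δ y) (Set.Ioi 1) :=
    (continuousOn_const.sub hGc').div hGc' (fun y hy => (hGpos y (le_of_lt hy)).ne')
  have hhd : ∀ x, 1 < x →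
      HasDerivAt (hdelta g δ) ((1 - Gdelta g δ x) / Gdelta g δ x) x := by
    intro x hx
    have hi : IntervalIntegrable (fun y => (1 - Gdelta g δ y) / Gdelta g δ y) volume 1 x := by
      apply ContinuousOn.intervalIntegrable
      rw [Set.uIcc_of_le hx.le]
      exact (continuousOn_const.sub (hGc x hx.le)).div (hGc x hx.le)
        (fun y hy => (hGpos y hy.1).ne')
    exact intervalIntegral.integral_hasDerivAt_right hi
      (hqc.stronglyMeasurableAtFilter isOpen_Ioi x hx) (hqc.continuousAt (Ioi_mem_nhds hx))
  intro x hx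
  have hx1 : 1 < x := hx
  have hG := hGpos x hx1.le
  have hg := hgpos x hx1.le
  have hev : deriv (hdelta g δ) =ᶠ[nhds x] fun y => (1 - Gdelta g δ y) / Gdelta g δ y := by
    filter_upwards [Ioi_mem_nhds hx1] with y hy
    exact (hhd y hy).deriv
  have hd2 := (((hGd x hx1).const_sub 1).div (hGd x hx1) hG.ne').congr_of_eventuallyEq hev
  refine ⟨(hhd x hx1).differentiableAt, hd2.differentiableAt, ?_⟩
  rw [hd2.deriv, (hhd x hx1).deriv]
  have : 1 + δ ≠ 0 := by positivity
  field_simp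
  ring
end

section
/- Let g : [1,∞) → ℝ be continuous and positive with ∫₁^∞ dt/g(t) = 1, and let δ > 0. Then for all x > 1, (1 + h_δ'(x))² / (−h_δ''(x)) = ((1+δ)/δ)·g(x). -/
open MeasureTheory Set

theorem stmt_4 (g : ℝ → ℝ) (δ : ℝ) (hδ : 0 < δ)
    (hgc : ContinuousOn g (Set.Ici 1))
    (hgpos : ∀ x ∈ Set.Ici (1:ℝ), 0 < g x)
    (hgint : IntegrableOn (fun t => 1 / g t) (Set.Ioi 1))
    (hgnorm : (∫ t in Set.Ioi (1:ℝ), 1 / g t) = 1) :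
    ∀ x ∈ Set.Ioi (1:ℝ),
      (1 + deriv (hdelta g δ) x) ^ 2 / (-(deriv (deriv (hdelta g δ)) x)) = ((1 + δ) / δ) * g x := by
  have hcont : ContinuousOn (fun t => 1 / g t) (Set.Ici 1) :=
    continuousOn_const.div hgc (fun t ht => (hgpos t ht).ne')
  have hII : ∀ x, 1 ≤ x → IntervalIntegrable (fun t => 1 / g t) volume 1 x := by
    intro x hx
    apply ContinuousOn.intervalIntegrable
    rw [Set.uIcc_of_le hx]
    exact hcont.mono Set.Icc_subset_Ici_self
  have hGpos : ∀ x, 1 ≤ x → 0 < Gdelta g δ x := by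
    intro x hx
    have h0 : 0 ≤ ∫ t in (1:ℝ)..x, 1 / g t := by
      apply intervalIntegral.integral_nonneg hx
      intro u hu
      exact (one_div_pos.mpr (hgpos u hu.1)).le
    unfold Gdelta
    positivity
  have hGder : ∀ x, 1 < x → HasDerivAt (Gdelta g δ) ((1 / (1 + δ)) * (δ * (1 / g x))) x := by
    intro x hx
    have h1 : HasDerivAt (fun u => ∫ t in (1:ℝ)..u, 1 / g t) (1 / g x) x := by
      apply intervalIntegral.integral_hasDerivAt_right (hII x hx.le)
      · exact (hcont.mono Set.Ioi_subset_Ici_self).stronglyMeasurableAtFilter isOpen_Ioi x hx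
      · exact hcont.continuousAt (Ici_mem_nhds hx)
    exact ((h1.const_mul δ).const_add 1).const_mul (1 / (1 + δ))
  have hGcont : ∀ x, 1 ≤ x → ContinuousOn (Gdelta g δ) (Set.Icc 1 x) := by
    intro x hx
    have h1 : ContinuousOn (fun u => ∫ t in (1:ℝ)..u, 1 / g t) (Set.uIcc 1 x) := by
      apply intervalIntegral.continuousOn_primitive_interval
      rw [Set.uIcc_of_le hx]
      exact (hcont.mono Set.Icc_subset_Ici_self).integrableOn_Icc
    rw [Set.uIcc_of_le hx] at h1
    exact continuousOn_const.mul (continuousOn_const.add (continuousOn_const.mul h1))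
  have hFder : ∀ x, 1 < x → HasDerivAt (fun y => (1 - Gdelta g δ y) / Gdelta g δ y)
      (-((1 / (1 + δ)) * (δ * (1 / g x))) / (Gdelta g δ x) ^ 2) x := by
    intro x hx
    have h := ((hGder x hx).const_sub 1).div (hGder x hx) (hGpos x hx.le).ne'
    refine HasDerivAt.congr_deriv h ?_
    congr 1
    ring
  have hhder : ∀ x, 1 < x → HasDerivAt (hdelta g δ) ((1 - Gdelta g δ x) / Gdelta g δ x) x := by
    intro x hx
    have hc : ContinuousOn (fun y => (1 - Gdelta g δ y) / Gdelta g δ y) (Set.Ioi 1) :=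
      fun y hy => (hFder y hy).continuousAt.continuousWithinAt
    apply intervalIntegral.integral_hasDerivAt_right
    · apply ContinuousOn.intervalIntegrable
      rw [Set.uIcc_of_le hx.le]
      exact (continuousOn_const.sub (hGcont x hx.le)).div (hGcont x hx.le)
        (fun y hy => (hGpos y hy.1).ne')
    · exact hc.stronglyMeasurableAtFilter isOpen_Ioi x hx
    · exact (hFder x hx).continuousAt
  intro x hx
  have hx' : 1 < x := hx
  have hEq : deriv (hdelta g δ) =ᶠ[nhds x] fun y => (1 - Gdelta g δ y) / Gdelta g δ y := by
    filter_upwards [Ioi_mem_nhds hx'] with y hy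
    exact (hhder y hy).deriv
  rw [hEq.deriv_eq, (hFder x hx').deriv, (hhder x hx').deriv]
  have hG := hGpos x hx'.le
  have hg := hgpos x hx'.le
  have hd : 0 < 1 + δ := by linarith
  generalize Gdelta g δ x = G at *
  field_simp
  ring
end

section
/- Let s ∈ (0,1], δ > 0, and let g(x) = s⁻¹·e^{s(x−1)} for x ≥ 1. Then sup_{x ≥ 1} (x + h_δ(x))/g(x) ≤ (1+δ)·exp(−(1+δ−s)/(1+δ)) ≤ 1 + δ. -/
open MeasureTheory Set

theorem aux_G (s : ℝ) (hs0 : 0 < s) (δ : ℝ) (hδ : 0 < δ)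
    (g : ℝ → ℝ) (hg : ∀ x, g x = s⁻¹ * Real.exp (s * (x - 1))) (x : ℝ) :
    Gdelta g δ x = (1 + δ - δ * Real.exp (-(s * (x - 1)))) / (1 + δ) := by
  have h : ∫ t in (1:ℝ)..x, 1 / g t = 1 - Real.exp (-(s * (x - 1))) := by
    have hd : ∀ t ∈ uIcc 1 x,
        HasDerivAt (fun t : ℝ => - Real.exp (-(s * (t - 1)))) (1 / g t) t := by
      intro t _
      have h1 : HasDerivAt (fun t : ℝ => -(s * (t - 1))) (-(s * 1)) t :=
        (((hasDerivAt_id t).sub_const 1).const_mul s).neg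
      have h2 := h1.exp.neg
      refine HasDerivAt.congr_deriv h2 ?_
      rw [hg, Real.exp_neg]
      field_simp
    have hgc : Continuous (fun t => 1 / g t) := by
      have : (fun t => 1 / g t) = fun t => s * Real.exp (-(s * (t - 1))) := by
        funext t
        rw [hg, Real.exp_neg]
        field_simp
      rw [this]
      fun_prop
    rw [intervalIntegral.integral_eq_sub_of_hasDerivAt hd (hgc.intervalIntegrable _ _)]
    simp
    ring
  rw [Gdelta, h]
  field_simp
  ring

theorem aux_h (s : ℝ) (hs0 : 0 < s) (δ : ℝ) (hδ : 0 < δ)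
    (g : ℝ → ℝ) (hg : ∀ x, g x = s⁻¹ * Real.exp (s * (x - 1))) (x : ℝ) (hx : 1 ≤ x) :
    hdelta g δ x = s⁻¹ * Real.log (1 + δ - δ * Real.exp (-(s * (x - 1)))) := by
  have hpos : ∀ t ∈ uIcc 1 x, 0 < 1 + δ - δ * Real.exp (-(s * (t - 1))) := by
    intro t ht
    rw [uIcc_of_le hx] at ht
    have : Real.exp (-(s * (t - 1))) ≤ 1 := by
      rw [Real.exp_le_one_iff]
      have := mul_nonneg hs0.le (sub_nonneg.2 ht.1)
      linarith
    nlinarith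
  have he : ∀ t ∈ uIcc 1 x, (1 - Gdelta g δ t) / Gdelta g δ t =
      δ * Real.exp (-(s * (t - 1))) / (1 + δ - δ * Real.exp (-(s * (t - 1)))) := by
    intro t ht
    have h0 := (hpos t ht).ne'
    rw [aux_G s hs0 δ hδ g hg]
    have : 1 + δ ≠ 0 := by positivity
    generalize Real.exp (-(s * (t - 1))) = u at *
    rw [div_eq_div_iff (div_ne_zero h0 this) h0]
    field_simp
    ring
  rw [hdelta, intervalIntegral.integral_congr he]
  have hd : ∀ t ∈ uIcc 1 x, HasDerivAt
      (fun t : ℝ => s⁻¹ * Real.log (1 + δ - δ * Real.exp (-(s * (t - 1)))))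
      (δ * Real.exp (-(s * (t - 1))) / (1 + δ - δ * Real.exp (-(s * (t - 1))))) t := by
    intro t ht
    have h1 : HasDerivAt (fun t : ℝ => -(s * (t - 1))) (-(s * 1)) t :=
      (((hasDerivAt_id t).sub_const 1).const_mul s).neg
    have h2 := (((h1.exp.const_mul δ).const_sub (1 + δ)).log (hpos t ht).ne').const_mul s⁻¹
    refine HasDerivAt.congr_deriv h2 ?_
    field_simp
  rw [intervalIntegral.integral_eq_sub_of_hasDerivAt hd]
  · simp
  · apply ContinuousOn.intervalIntegrable
    apply ContinuousOn.div
    · fun_prop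
    · fun_prop
    · exact fun t ht => (hpos t ht).ne'

theorem aux_log (s δ y : ℝ) (hδ : 0 < δ) (hy : 0 < y) :
    s + Real.log y ≤ (y + δ) * Real.exp (-((1 + δ - s) / (1 + δ))) := by
  obtain ⟨t, ht⟩ : ∃ t, t = s / (1 + δ) := ⟨_, rfl⟩
  have hs : s = t * (1 + δ) := by rw [ht]; field_simp
  have h1 : -((1 + δ - s) / (1 + δ)) = t - 1 := by rw [ht]; field_simp; ring
  rw [h1]
  have h2 := Real.add_one_le_exp (t - 1)
  have h3 := Real.log_le_sub_one_of_pos (mul_pos hy (Real.exp_pos (t - 1)))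
  rw [Real.log_mul hy.ne' (Real.exp_pos _).ne', Real.log_exp] at h3
  nlinarith

theorem stmt_11 (s : ℝ) (hs0 : 0 < s) (hs1 : s ≤ 1) (δ : ℝ) (hδ : 0 < δ)
    (g : ℝ → ℝ) (hg : ∀ x, g x = s⁻¹ * Real.exp (s * (x - 1))) :
    (⨆ x : Set.Ici (1:ℝ), ((x : ℝ) + hdelta g δ x) / g x) ≤
        (1 + δ) * Real.exp (-((1 + δ - s) / (1 + δ))) ∧
    (1 + δ) * Real.exp (-((1 + δ - s) / (1 + δ))) ≤ 1 + δ := by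
  constructor
  · have : Nonempty (Set.Ici (1:ℝ)) := ⟨⟨1, self_mem_Ici⟩⟩
    apply ciSup_le
    rintro ⟨x, hx⟩
    have hx : 1 ≤ x := hx
    simp only
    rw [aux_h s hs0 δ hδ g hg x hx, hg, div_le_iff₀ (by positivity)]
    have hE : 1 ≤ Real.exp (s * (x - 1)) :=
      Real.one_le_exp (mul_nonneg hs0.le (sub_nonneg.2 hx))
    have hy : 0 < (1 + δ) * Real.exp (s * (x - 1)) - δ := by nlinarith
    have key := aux_log s δ _ hδ hy
    have hl : 1 + δ - δ * Real.exp (-(s * (x - 1))) =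
        ((1 + δ) * Real.exp (s * (x - 1)) - δ) * Real.exp (-(s * (x - 1))) := by
      rw [Real.exp_neg]
      field_simp
    rw [hl, Real.log_mul hy.ne' (Real.exp_pos _).ne', Real.log_exp]
    have := mul_le_mul_of_nonneg_left key (inv_pos.2 hs0).le
    calc _ = s⁻¹ * (s + Real.log ((1 + δ) * Real.exp (s * (x - 1)) - δ)) := by
          field_simp
          ring
      _ ≤ _ := this
      _ = _ := by ring
  · have : Real.exp (-((1 + δ - s) / (1 + δ))) ≤ 1 := by
      rw [Real.exp_le_one_iff]
      have : 0 ≤ (1 + δ - s) / (1 + δ) := div_nonneg (by linarith) (by linarith)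
      linarith
    nlinarith
end

section
/- Let δ > 0 and let g(x) = x² for x ≥ 1. Then sup_{x ≥ 1} (x + h_δ(x))/x² ≤ (1+δ)²/(4δ). -/
open MeasureTheory Set

lemma Gdelta_sq (δ : ℝ) (hδ : 0 < δ) (g : ℝ → ℝ) (hg : ∀ x, g x = x ^ 2) (y : ℝ) (hy : 1 ≤ y) :
    Gdelta g δ y = 1 - δ / (1 + δ) / y := by
  have h1 : ∫ t in (1:ℝ)..y, 1 / g t = -y⁻¹ - (-(1:ℝ)⁻¹) := by
    have hpos : ∀ t ∈ uIcc (1:ℝ) y, 0 < t := by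
      intro t ht
      rw [uIcc_of_le hy] at ht
      linarith [ht.1]
    have := intervalIntegral.integral_eq_sub_of_hasDerivAt (a := (1:ℝ)) (b := y)
      (f := fun t : ℝ => -t⁻¹) (f' := fun t => 1 / g t) ?_ ?_
    · simpa using this
    · intro t ht
      have h := (hasDerivAt_inv (hpos t ht).ne').neg
      simp only [neg_neg] at h
      simp only [hg, one_div]
      exact h
    · apply ContinuousOn.intervalIntegrable
      simp only [hg]
      apply ContinuousOn.div (by fun_prop) (by fun_prop)
      intro t ht
      exact (pow_pos (hpos t ht) 2).ne'
  have : 0 < y := by linarith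
  rw [Gdelta, h1]
  field_simp
  ring

lemma hdelta_sq (δ : ℝ) (hδ : 0 < δ) (g : ℝ → ℝ) (hg : ∀ x, g x = x ^ 2) (x c : ℝ) (hx : 1 ≤ x)
    (hc : c = δ / (1 + δ)) (hc0 : 0 < c) (hc1 : c < 1) :
    hdelta g δ x = c * Real.log (x - c) - c * Real.log (1 - c) := by
  have hpos : ∀ t ∈ uIcc (1:ℝ) x, 1 ≤ t := by
    intro t ht
    rw [uIcc_of_le hx] at ht
    exact ht.1
  have e : hdelta g δ x = ∫ y in (1:ℝ)..x, c * (1 / (y - c)) := by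
    unfold hdelta
    apply intervalIntegral.integral_congr
    intro y hy
    have h1 := hpos y hy
    have h2 : 0 < y - c := by linarith
    have h3 : 0 < y := by linarith
    have h4 : 1 - c / y = (y - c) / y := by field_simp
    simp only [Gdelta_sq δ hδ g hg y h1, ← hc]
    rw [h4]
    field_simp
    ring
  rw [e]
  apply intervalIntegral.integral_eq_sub_of_hasDerivAt (f := fun t : ℝ => c * Real.log (t - c))
  · intro t ht
    have h1 := hpos t ht
    exact (((hasDerivAt_id t).sub_const c).log (by simp only [id]; linarith)).const_mul c
  · apply ContinuousOn.intervalIntegrable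
    apply ContinuousOn.mul (by fun_prop)
    apply ContinuousOn.div (by fun_prop) (by fun_prop)
    intro t ht
    have h1 := hpos t ht
    linarith

theorem stmt_12 (δ : ℝ) (hδ : 0 < δ) (g : ℝ → ℝ) (hg : ∀ x, g x = x ^ 2) :
    (⨆ x : Set.Ici (1:ℝ), ((x : ℝ) + hdelta g δ x) / (x : ℝ) ^ 2) ≤ (1 + δ) ^ 2 / (4 * δ) := by
  have : Nonempty (Set.Ici (1:ℝ)) := ⟨⟨1, Set.self_mem_Ici⟩⟩
  apply ciSup_le
  rintro ⟨x, hx⟩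
  have hx : 1 ≤ x := hx
  obtain ⟨c, hc⟩ : ∃ c, c = δ / (1 + δ) := ⟨_, rfl⟩
  have hc0 : 0 < c := by rw [hc]; positivity
  have hc1 : c < 1 := by rw [hc, div_lt_one (by positivity)]; linarith
  have hR : (1 + δ) ^ 2 / (4 * δ) = 1 / (4 * c * (1 - c)) := by
    have : 1 - c = 1 / (1 + δ) := by rw [hc]; field_simp; ring
    rw [this, hc]
    field_simp
  have h1c : 0 < 1 - c := by linarith
  have hxc : 0 < x - c := by linarith
  simp only
  rw [hR, hdelta_sq δ hδ g hg x c hx hc hc0 hc1, div_le_div_iff₀ (by positivity) (by positivity)]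
  have l1 : Real.log (x - c) - Real.log (1 - c)
      = Real.log (2 * c) + Real.log ((x - c) / (2 * c * (1 - c))) := by
    rw [Real.log_div (by positivity) (by positivity), Real.log_mul (x := 2 * c) (y := 1 - c) (by positivity) (by positivity)]
    ring
  have l2 := Real.log_le_sub_one_of_pos (show 0 < 2 * c by positivity)
  have l3 := Real.log_le_sub_one_of_pos (show 0 < (x - c) / (2 * c * (1 - c)) by positivity)
  have l4 : Real.log (x - c) - Real.log (1 - c) ≤ 2 * c - 2 + (x - c) / (2 * c * (1 - c)) := by
    linarith
  have l5 := mul_le_mul_of_nonneg_left l4 (show 0 ≤ 4 * c * (1 - c) * c by positivity)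
  have l6 : 4 * c * (1 - c) * c * (2 * c - 2 + (x - c) / (2 * c * (1 - c)))
      = 4 * c * (1 - c) * c * (2 * c - 2) + 2 * c * (x - c) := by
    field_simp
    ring
  rw [l6] at l5
  nlinarith [sq_nonneg (x - (3 * c - 2 * c ^ 2)), sq_nonneg (c * (1 - 2 * c))]
end

section
/- Let s ∈ (0,1], δ > 0, and let g(x) = s⁻¹·x^{1+s} for x ≥ 1. Then for every x ≥ 1, ∫₁^x dt/g(t) = 1 − x^{−s} (so ∫₁^∞ dt/g(t) = 1), and sup_{x ≥ 1} (x + h_δ(x))/g(x) ≤ s·(1+δ). -/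
open MeasureTheory Set

theorem stmt_15 (s : ℝ) (hs0 : 0 < s) (hs1 : s ≤ 1) (δ : ℝ) (hδ : 0 < δ)
    (g : ℝ → ℝ) (hg : ∀ x, g x = s⁻¹ * x ^ (1 + s)) :
    (∀ x ≥ (1:ℝ), (∫ t in (1:ℝ)..x, 1 / g t) = 1 - x ^ (-s)) ∧
    (∫ t in Set.Ioi (1:ℝ), 1 / g t) = 1 ∧
    (⨆ x : Set.Ici (1:ℝ), ((x : ℝ) + hdelta g δ x) / g x) ≤ s * (1 + δ) := by
  have hgi : ∀ t : ℝ, 0 < t → 1 / g t = s * t ^ (-(1 + s)) := by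
    intro t ht
    rw [hg, Real.rpow_neg ht.le, one_div, mul_inv, inv_inv]
  have h1 : ∀ x ≥ (1:ℝ), (∫ t in (1:ℝ)..x, 1 / g t) = 1 - x ^ (-s) := by
    intro x hx
    have hc : (∫ t in (1:ℝ)..x, 1 / g t) = ∫ t in (1:ℝ)..x, s * t ^ (-(1 + s)) := by
      apply intervalIntegral.integral_congr
      intro t ht
      rw [uIcc_of_le hx] at ht
      exact hgi t (by linarith [ht.1])
    rw [hc, intervalIntegral.integral_const_mul, integral_rpow]
    · have e : -(1 + s) + 1 = -s := by ring
      rw [e, Real.one_rpow]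
      field_simp
      ring
    · right
      refine ⟨by linarith, ?_⟩
      rw [uIcc_of_le hx]
      intro h
      linarith [h.1]
  refine ⟨h1, ?_, ?_⟩
  · have hc : (∫ t in Set.Ioi (1:ℝ), 1 / g t) = ∫ t in Set.Ioi (1:ℝ), s * t ^ (-(1 + s)) := by
      apply setIntegral_congr_fun measurableSet_Ioi
      intro t ht
      exact hgi t (lt_trans one_pos ht)
    rw [hc, integral_const_mul, integral_Ioi_rpow_of_lt (by linarith) one_pos]
    have e : -(1 + s) + 1 = -s := by ring
    rw [e, Real.one_rpow]
    field_simp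
  · haveI : Nonempty (Set.Ici (1:ℝ)) := ⟨⟨1, Set.mem_Ici.mpr le_rfl⟩⟩
    apply ciSup_le
    rintro ⟨x, hx⟩
    have hx : (1:ℝ) ≤ x := hx
    have hb : hdelta g δ x ≤ δ * |x - 1| := by
      refine le_trans (le_abs_self _) ?_
      rw [← Real.norm_eq_abs]
      apply intervalIntegral.norm_integral_le_of_norm_le_const
      intro y hy
      rw [uIoc_of_le hx] at hy
      have hy1 : (1:ℝ) ≤ y := hy.1.le
      have hp : 0 < y ^ (-s) := Real.rpow_pos_of_pos (by linarith) _
      have hp1 : y ^ (-s) ≤ 1 := Real.rpow_le_one_of_one_le_of_nonpos hy1 (by linarith)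
      have hG : Gdelta g δ y = (1 + δ * (1 - y ^ (-s))) / (1 + δ) := by
        rw [Gdelta, h1 y hy1]; ring
      have hn : 0 ≤ δ * (1 - y ^ (-s)) := mul_nonneg hδ.le (by linarith)
      have hn2 : 0 ≤ δ * y ^ (-s) := by positivity
      have hG0 : 0 < Gdelta g δ y := by rw [hG]; positivity
      have hG1 : Gdelta g δ y ≤ 1 := by
        rw [hG, div_le_one (by positivity)]; linarith
      have hG2 : 1 ≤ Gdelta g δ y * (1 + δ) := by
        rw [hG, div_mul_cancel₀ _ (by positivity)]; linarith
      rw [Real.norm_eq_abs, abs_of_nonneg (div_nonneg (by linarith) hG0.le), div_le_iff₀ hG0]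
      linarith
    rw [abs_of_nonneg (by linarith)] at hb
    have hxp : x ≤ x ^ (1 + s) := by
      simpa using Real.rpow_le_rpow_of_exponent_le hx (show (1:ℝ) ≤ 1 + s by linarith)
    have hgp : 0 < g x := by
      rw [hg]; have := Real.rpow_pos_of_pos (show 0 < x by linarith) (1 + s); positivity
    show (x + hdelta g δ x) / g x ≤ s * (1 + δ)
    rw [div_le_iff₀ hgp, hg]
    have e : s * (1 + δ) * (s⁻¹ * x ^ (1 + s)) = (1 + δ) * x ^ (1 + s) := by field_simp
    rw [e]
    have := mul_le_mul_of_nonneg_left hxp (show 0 ≤ 1 + δ by linarith)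
    linarith
end
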